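/- If the partition Y_1|Y_2|⋯|Y_l of (a subsystem of) an n-partite quantum system A_1A_2⋯A_n is coarser than the partition X_1|X_2|⋯|X_k (i.e., X_1|⋯|X_k ≻ Y_1|⋯|Y_l), then for every density operator ρ on H^{A_1}⊗⋯⊗H^{A_n} one has I'(X_1:X_2:⋯:X_k) ≥ I'(Y_1:Y_2:⋯:Y_l). -/

import Mathlib

open scoped BigOperators ComplexOrder
open Matrix

noncomputable section

/-- The function `x ↦ -x·log₂ x` (with the convention `0·log₂ 0 = 0`). -/
def negxlog2 (x : ℝ) : ℝ := -(x * Real.logb 2 x)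

/-- The von Neumann entropy (base 2), `S(ρ) = -Tr(ρ log₂ ρ)`, computed as the sum of
`-λ log₂ λ` over the eigenvalues of a Hermitian matrix (junk value `0` otherwise). -/
def vnEntropy {n : Type} [Fintype n] [DecidableEq n] (ρ : Matrix n n ℂ) : ℝ :=
  if h : ρ.IsHermitian then ∑ i, negxlog2 (h.eigenvalues i) else 0

/-- The Tsallis q-entropy `S_q(ρ) = (1 - Tr ρ^q)/(q-1)`, computed via eigenvalues. -/
def tsallisEntropy (q : ℝ) {n : Type} [Fintype n] [DecidableEq n] (ρ : Matrix n n ℂ) : ℝ :=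
  if h : ρ.IsHermitian then (1 - ∑ i, (h.eigenvalues i) ^ q) / (q - 1) else 0

/-- A density operator: positive semidefinite with unit trace. -/
def IsDensity {n : Type} [Fintype n] [DecidableEq n] (ρ : Matrix n n ℂ) : Prop :=
  ρ.PosSemidef ∧ ρ.trace = 1

/-- rank-one projection `|ψ⟩⟨ψ|`. -/
def outer {α : Type} (ψ : α → ℂ) : Matrix α α ℂ :=
  fun a b => ψ a * (starRingEnd ℂ) (ψ b)

section multi

variable {ι : Type} [Fintype ι] [DecidableEq ι] {d : ι → Type}
  [∀ i, Fintype (d i)] [∀ i, DecidableEq (d i)]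

/-- Combine an assignment of basis indices on the parties in `s` with one on the
complementary parties. -/
def combine (s : Finset ι) (x : (i : {j // j ∈ s}) → d i.1) (z : (i : {j // j ∉ s}) → d i.1)
    (i : ι) : d i :=
  if h : i ∈ s then x ⟨i, h⟩ else z ⟨i, h⟩

/-- The reduced state on the parties in `s`: partial trace over the complementary parties. -/
def pTr (ρ : Matrix (∀ i, d i) (∀ i, d i) ℂ) (s : Finset ι) :
    Matrix ((i : {j // j ∈ s}) → d i.1) ((i : {j // j ∈ s}) → d i.1) ℂ :=
  fun x y => ∑ z : (i : {j // j ∉ s}) → d i.1, ρ (combine s x z) (combine s y z)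

/-- von Neumann entropy of the reduced state on `s`. -/
def Sv (ρ : Matrix (∀ i, d i) (∀ i, d i) ℂ) (s : Finset ι) : ℝ := vnEntropy (pTr ρ s)

/-- Tsallis q-entropy of the reduced state on `s`. -/
def Sq (q : ℝ) (ρ : Matrix (∀ i, d i) (∀ i, d i) ℂ) (s : Finset ι) : ℝ :=
  tsallisEntropy q (pTr ρ s)

/-- Multipartite quantum mutual information `I(X₁:⋯:X_k) = Σ_s S(X_s) - S(X₁⋯X_k)` of a
partition `P` (each block a finset of parties, treated as a single party). -/
def MI (ρ : Matrix (∀ i, d i) (∀ i, d i) ℂ) (P : Finset (Finset ι)) : ℝ :=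
  (∑ X ∈ P, Sv ρ X) - Sv ρ (P.sup id)

/-- Dual multipartite quantum mutual information
`I'(X₁:⋯:X_k) = Σ_s S(X̄_s) - (k-1) S(X₁⋯X_k)`, where `X̄_s` is the union of all blocks
other than `X_s`. -/
def MI' (ρ : Matrix (∀ i, d i) (∀ i, d i) ℂ) (P : Finset (Finset ι)) : ℝ :=
  (∑ X ∈ P, Sv ρ (P.sup id \ X)) - ((P.card : ℝ) - 1) * Sv ρ (P.sup id)

/-- Tsallis multipartite quantum mutual information. -/
def MIq (q : ℝ) (ρ : Matrix (∀ i, d i) (∀ i, d i) ℂ) (P : Finset (Finset ι)) : ℝ :=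
  (∑ X ∈ P, Sq q ρ X) - Sq q ρ (P.sup id)

/-- Tsallis dual multipartite quantum mutual information. -/
def MIq' (q : ℝ) (ρ : Matrix (∀ i, d i) (∀ i, d i) ℂ) (P : Finset (Finset ι)) : ℝ :=
  (∑ X ∈ P, Sq q ρ (P.sup id \ X)) - ((P.card : ℝ) - 1) * Sq q ρ (P.sup id)

/-- The finest partition of the set `s` of parties: each party its own block. -/
def finest (s : Finset ι) : Finset (Finset ι) := s.image fun i => {i}

end multi

/-- A partition (of a subsystem): nonempty pairwise disjoint blocks. -/
def IsPartition {ι : Type} [DecidableEq ι] (P : Finset (Finset ι)) : Prop :=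
  (∀ X ∈ P, X.Nonempty) ∧ (P : Set (Finset ι)).PairwiseDisjoint id

/-- One coarsening step: (a) discarding whole blocks, (b) merging blocks into one block,
(c) discarding some parties from within a block containing at least two parties. -/
inductive CoarserStep {ι : Type} [DecidableEq ι] : Finset (Finset ι) → Finset (Finset ι) → Prop
  | discard {P Q : Finset (Finset ι)} (hQP : Q ⊆ P) (hQ : Q.Nonempty) : CoarserStep P Q
  | merge (P T : Finset (Finset ι)) (hT : T ⊆ P) (hT' : T.Nonempty) :
      CoarserStep P (insert (T.sup id) (P \ T))
  | shrink (P : Finset (Finset ι)) (X X' : Finset ι) (hX : X ∈ P) (h2 : 2 ≤ X.card)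
      (hsub : X' ⊆ X) (hne : X'.Nonempty) : CoarserStep P (insert X' (P.erase X))

/-- `Coarser P Q` : the partition `Q` is coarser than `P` (`P ≻ Q`). -/
def Coarser {ι : Type} [DecidableEq ι] (P Q : Finset (Finset ι)) : Prop :=
  Relation.ReflTransGen CoarserStep P Q

end

/-!
The dual mutual information is `I'(P) = S(Z) + ∑_{X ∈ P} (S(Z \ X) - S(Z))` with `Z` the union of
the blocks. Strong subadditivity says that `S` is submodular, so `S(Z \ X) - S(Z)` does not decrease
when `Z` grows and is subadditive over disjoint `X`; hence no coarsening step increases `I'`.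

Strong subadditivity follows from the monotonicity of the relative entropy under partial traces.
The relative entropy is a regularized integral over `t` of the quasi-entropies
`⟨A, (L_B + t R_A)⁻¹ A⟩`, and each of these is the maximum over `X` of a functional that is
preserved when the observables of a subsystem are embedded into those of the whole system, where the
maximum is over more `X` and hence at least as large.
-/

open Filter Topology
open scoped Kronecker

section Spectral

lemma trace_conjTranspose_mul_eq_sum {m n : Type*} [Fintype m] [Fintype n] (C D : Matrix m n ℂ) :
    (Cᴴ * D).trace = ∑ i, ∑ j, star (C j i) * D j i := by
  simp only [trace, diag_apply, mul_apply, conjTranspose_apply]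

variable {n : Type*} [Fintype n] [DecidableEq n] {A B : Matrix n n ℂ}

lemma continuousOn_spectrum_real (f : ℝ → ℝ) (A : Matrix n n ℂ) :
    ContinuousOn f (spectrum ℝ A) :=
  A.finite_real_spectrum.continuousOn f

lemma cfc_eq_eigenvectorUnitary_mul (hA : A.IsHermitian) (f : ℝ → ℝ) :
    cfc f A = (hA.eigenvectorUnitary : Matrix n n ℂ) *
      diagonal (fun i => (f (hA.eigenvalues i) : ℂ)) * (hA.eigenvectorUnitary : Matrix n n ℂ)ᴴ := by
  rw [hA.cfc_eq, IsHermitian.cfc, Unitary.conjStarAlgAut_apply]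
  rfl

lemma trace_cfc (hA : A.IsHermitian) (f : ℝ → ℝ) :
    (cfc f A).trace = ∑ i, (f (hA.eigenvalues i) : ℂ) := by
  rw [cfc_eq_eigenvectorUnitary_mul hA, trace_mul_cycle, ← star_eq_conjTranspose,
    Unitary.coe_star_mul_self, one_mul, trace_diagonal]

/-- The unitary matrix of inner products between the eigenvectors of `B` (rows) and those of `A`
(columns). -/
noncomputable def eigenTransition (hA : A.IsHermitian) (hB : B.IsHermitian) : Matrix n n ℂ :=
  (hB.eigenvectorUnitary : Matrix n n ℂ)ᴴ * (hA.eigenvectorUnitary : Matrix n n ℂ)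

lemma trace_cfc_mul_cfc (hA : A.IsHermitian) (hB : B.IsHermitian) (f g : ℝ → ℝ) :
    (cfc f A * cfc g B).trace.re = ∑ i, ∑ j,
      Complex.normSq (eigenTransition hA hB j i) *
        (f (hA.eigenvalues i) * g (hB.eigenvalues j)) := by
  set W := eigenTransition hA hB with hW
  have trace_eq : (cfc f A * cfc g B).trace =
      (Wᴴ * (diagonal (fun j => (g (hB.eigenvalues j) : ℂ)) * W *
        diagonal (fun i => (f (hA.eigenvalues i) : ℂ)))).trace := by
    rw [cfc_eq_eigenvectorUnitary_mul hA, cfc_eq_eigenvectorUnitary_mul hB, trace_mul_comm,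
      ← Matrix.mul_assoc, trace_mul_comm, hW, eigenTransition, conjTranspose_mul,
      conjTranspose_conjTranspose]
    simp only [Matrix.mul_assoc]
  rw [trace_eq, trace_conjTranspose_mul_eq_sum, Complex.re_sum]
  refine Finset.sum_congr rfl fun i _ => ?_
  rw [Complex.re_sum]
  refine Finset.sum_congr rfl fun j _ => ?_
  rw [mul_diagonal, diagonal_mul]
  simp only [RCLike.star_def, Complex.mul_re, Complex.mul_im, Complex.conj_re, Complex.conj_im,
    Complex.ofReal_re, Complex.ofReal_im, Complex.normSq_apply]
  ring

end Spectral

section RelativeEntropy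

variable {n : Type*} [Fintype n] [DecidableEq n] {A B : Matrix n n ℂ}

/-- Umegaki's relative entropy `Tr A (log A - log B)`, with natural logarithms, so that it is the
integral of quasi-entropies without extra constants. -/
noncomputable def relEntropy (A B : Matrix n n ℂ) : ℝ :=
  (A * (cfc Real.log A - cfc Real.log B)).trace.re

lemma mul_cfc_log (hA : A.IsHermitian) :
    A * cfc Real.log A = cfc (fun x => x * Real.log x) A := by
  rw [cfc_mul (fun x => x) Real.log A (continuousOn_spectrum_real _ A)
    (continuousOn_spectrum_real _ A), cfc_id' ℝ A hA.isSelfAdjoint]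

lemma relEntropy_eq_sum (hA : A.IsHermitian) (hB : B.IsHermitian) :
    relEntropy A B = ∑ i, ∑ j, Complex.normSq (eigenTransition hA hB j i) *
      (hA.eigenvalues i * (Real.log (hA.eigenvalues i) - Real.log (hB.eigenvalues j))) := by
  have trace_log_self := trace_cfc_mul_cfc hA hB (fun x => x * Real.log x) (fun _ => 1)
  have trace_log_other := trace_cfc_mul_cfc hA hB (fun x => x) Real.log
  rw [cfc_const_one ℝ B hB.isSelfAdjoint, Matrix.mul_one, ← mul_cfc_log hA] at trace_log_self
  rw [cfc_id' ℝ A hA.isSelfAdjoint] at trace_log_other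
  rw [relEntropy, Matrix.mul_sub, trace_sub, Complex.sub_re, trace_log_self, trace_log_other]
  simp only [← Finset.sum_sub_distrib, ← mul_sub, mul_one]

lemma trace_eq_sum_normSq_eigenTransition (hA : A.IsHermitian) (hB : B.IsHermitian) :
    A.trace.re = ∑ i, ∑ j, Complex.normSq (eigenTransition hA hB j i) * hA.eigenvalues i := by
  have h := trace_cfc_mul_cfc hA hB (fun x => x) (fun _ => 1)
  simpa only [cfc_const_one ℝ B hB.isSelfAdjoint, cfc_id' ℝ A hA.isSelfAdjoint,
    Matrix.mul_one, mul_one] using h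

/-- The quasi-entropy `⟨A, (L_B + t R_A)⁻¹ A⟩`, where `L_B` and `R_A` are left and right
multiplication and the inner product is Hilbert-Schmidt, written in the joint eigenbasis of
`L_B` and `R_A`. -/
noncomputable def quasiEntropy (hA : A.IsHermitian) (hB : B.IsHermitian) (t : ℝ) : ℝ :=
  ∑ i, ∑ j, Complex.normSq (eigenTransition hA hB j i) *
    (hA.eigenvalues i ^ 2 / (hB.eigenvalues j + t * hA.eigenvalues i))

/-- The concave quadratic functional `2 Re ⟨X, A⟩ - ⟨X, (L_B + t R_A) X⟩`, whose maximum over `X` is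
the quasi-entropy. -/
noncomputable def quasiFunctional (A B : Matrix n n ℂ) (t : ℝ) (X : Matrix n n ℂ) : ℝ :=
  (2 * (Xᴴ * A).trace - (Xᴴ * B * X).trace - t * (Xᴴ * X * A).trace).re

lemma two_mul_re_star_mul_sub (y z : ℂ) {m : ℝ} (hm : m ≠ 0) :
    2 * (star y * z).re - m * Complex.normSq y =
      Complex.normSq z / m - Complex.normSq (m * y - z) / m := by
  simp only [Complex.star_def, Complex.mul_re, Complex.conj_re, Complex.conj_im,
    Complex.normSq_apply, Complex.sub_re, Complex.sub_im, Complex.mul_im, Complex.ofReal_re,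
    Complex.ofReal_im]
  field_simp
  ring

lemma quasiFunctional_unitary_conj (U V : unitaryGroup n ℂ) (P Q Y : Matrix n n ℂ) (t : ℝ) :
    quasiFunctional ((U : Matrix n n ℂ) * P * (U : Matrix n n ℂ)ᴴ)
        ((V : Matrix n n ℂ) * Q * (V : Matrix n n ℂ)ᴴ) t
        ((V : Matrix n n ℂ) * Y * (U : Matrix n n ℂ)ᴴ) =
      (2 * (Yᴴ * ((V : Matrix n n ℂ)ᴴ * (U : Matrix n n ℂ) * P)).trace - (Yᴴ * (Q * Y)).trace -
        t * (Yᴴ * (Y * P)).trace).re := by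
  have star_mul_cancel (W : unitaryGroup n ℂ) (Z : Matrix n n ℂ) :
      (W : Matrix n n ℂ)ᴴ * ((W : Matrix n n ℂ) * Z) = Z := by
    rw [← Matrix.mul_assoc, ← star_eq_conjTranspose, Unitary.coe_star_mul_self, Matrix.one_mul]
  have trace_conj (Z : Matrix n n ℂ) :
      ((U : Matrix n n ℂ) * (Z * (U : Matrix n n ℂ)ᴴ)).trace = Z.trace := by
    rw [trace_mul_comm, Matrix.mul_assoc, ← star_eq_conjTranspose, Unitary.coe_star_mul_self,
      Matrix.mul_one]
  rw [quasiFunctional, ← trace_conj (Yᴴ * (_ * P)), ← trace_conj (Yᴴ * (Q * Y)),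
    ← trace_conj (Yᴴ * (Y * P))]
  simp only [conjTranspose_mul, conjTranspose_conjTranspose, Matrix.mul_assoc, star_mul_cancel]

lemma quasiFunctional_eq_sum (hA : A.IsHermitian) (hB : B.IsHermitian) (t : ℝ)
    (Y : Matrix n n ℂ) :
    quasiFunctional A B t ((hB.eigenvectorUnitary : Matrix n n ℂ) * Y *
        (hA.eigenvectorUnitary : Matrix n n ℂ)ᴴ) =
      ∑ i, ∑ j, (2 * (star (Y j i) * (eigenTransition hA hB j i * hA.eigenvalues i)).re -
        (hB.eigenvalues j + t * hA.eigenvalues i) * Complex.normSq (Y j i)) := by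
  have h := quasiFunctional_unitary_conj hA.eigenvectorUnitary hB.eigenvectorUnitary
    (diagonal fun i => (hA.eigenvalues i : ℂ)) (diagonal fun j => (hB.eigenvalues j : ℂ)) Y t
  rw [← cfc_eq_eigenvectorUnitary_mul hA fun x => x,
    ← cfc_eq_eigenvectorUnitary_mul hB fun x => x, cfc_id' ℝ A hA.isSelfAdjoint,
    cfc_id' ℝ B hB.isSelfAdjoint, ← eigenTransition] at h
  rw [h]
  simp only [trace_conjTranspose_mul_eq_sum, mul_diagonal, diagonal_mul, Finset.mul_sum,
    ← Finset.sum_sub_distrib, Complex.re_sum]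
  refine Finset.sum_congr rfl fun i _ => Finset.sum_congr rfl fun j _ => ?_
  simp only [RCLike.star_def, Complex.sub_re, Complex.mul_re, Complex.mul_im, Complex.conj_re,
    Complex.conj_im, Complex.ofReal_re, Complex.ofReal_im, Complex.re_ofNat, Complex.im_ofNat,
    Complex.normSq_apply]
  ring

lemma eigenvalues_add_mul_pos (hA : A.PosDef) (hB : B.PosDef) {t : ℝ} (ht : 0 ≤ t) (i j : n) :
    0 < hB.1.eigenvalues j + t * hA.1.eigenvalues i :=
  add_pos_of_pos_of_nonneg (hB.eigenvalues_pos j) (mul_nonneg ht (hA.eigenvalues_pos i).le)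

lemma quasiFunctional_eq_quasiEntropy_sub (hA : A.PosDef) (hB : B.PosDef) {t : ℝ} (ht : 0 ≤ t)
    (Y : Matrix n n ℂ) :
    quasiFunctional A B t ((hB.1.eigenvectorUnitary : Matrix n n ℂ) * Y *
        (hA.1.eigenvectorUnitary : Matrix n n ℂ)ᴴ) =
      quasiEntropy hA.1 hB.1 t - ∑ i, ∑ j,
        Complex.normSq (((hB.1.eigenvalues j + t * hA.1.eigenvalues i : ℝ) : ℂ) * Y j i -
          eigenTransition hA.1 hB.1 j i * hA.1.eigenvalues i) /
            (hB.1.eigenvalues j + t * hA.1.eigenvalues i) := by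
  rw [quasiFunctional_eq_sum, quasiEntropy]
  simp only [← Finset.sum_sub_distrib]
  refine Finset.sum_congr rfl fun i _ => Finset.sum_congr rfl fun j _ => ?_
  rw [two_mul_re_star_mul_sub _ _ (eigenvalues_add_mul_pos hA hB ht i j).ne', Complex.normSq_mul,
    Complex.normSq_ofReal, mul_div_assoc, sq]

lemma quasiFunctional_le_quasiEntropy (hA : A.PosDef) (hB : B.PosDef) {t : ℝ} (ht : 0 ≤ t)
    (X : Matrix n n ℂ) : quasiFunctional A B t X ≤ quasiEntropy hA.1 hB.1 t := by
  let U : Matrix n n ℂ := hA.1.eigenvectorUnitary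
  let V : Matrix n n ℂ := hB.1.eigenvectorUnitary
  have hX : X = V * (Vᴴ * X * U) * Uᴴ := by
    have hUU : U * Uᴴ = 1 := Unitary.coe_mul_star_self _
    have hVV : V * Vᴴ = 1 := Unitary.coe_mul_star_self _
    rw [Matrix.mul_assoc Vᴴ, ← Matrix.mul_assoc V, hVV, Matrix.one_mul, Matrix.mul_assoc, hUU,
      Matrix.mul_one]
  rw [hX, quasiFunctional_eq_quasiEntropy_sub hA hB ht]
  exact sub_le_self _ (Finset.sum_nonneg fun i _ => Finset.sum_nonneg fun j _ =>
    div_nonneg (Complex.normSq_nonneg _) (eigenvalues_add_mul_pos hA hB ht i j).le)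

lemma exists_quasiFunctional_eq_quasiEntropy (hA : A.PosDef) (hB : B.PosDef) {t : ℝ}
    (ht : 0 ≤ t) : ∃ X, quasiFunctional A B t X = quasiEntropy hA.1 hB.1 t := by
  refine ⟨_, (quasiFunctional_eq_quasiEntropy_sub hA hB ht (Matrix.of fun j i =>
    eigenTransition hA.1 hB.1 j i * hA.1.eigenvalues i /
      ((hB.1.eigenvalues j + t * hA.1.eigenvalues i : ℝ) : ℂ))).trans ?_⟩
  refine sub_eq_self.2 (Finset.sum_eq_zero fun i _ => Finset.sum_eq_zero fun j _ => ?_)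
  have hne : ((hB.1.eigenvalues j + t * hA.1.eigenvalues i : ℝ) : ℂ) ≠ 0 :=
    Complex.ofReal_ne_zero.2 (eigenvalues_add_mul_pos hA hB ht i j).ne'
  rw [of_apply, mul_div_cancel₀ _ hne, sub_self, Complex.normSq_zero, zero_div]

end RelativeEntropy

section IntegralRepresentation

lemma hasDerivAt_mul_log_add_mul {p q t : ℝ} (h : q + t * p ≠ 0) :
    HasDerivAt (fun s => p * Real.log (q + s * p)) (p ^ 2 / (q + t * p)) t := by
  have h_linear : HasDerivAt (fun s => q + s * p) p t := by
    simpa using ((hasDerivAt_id t).mul_const p).const_add q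
  have h_log := (h_linear.log h).const_mul p
  rwa [← mul_div_assoc, ← sq] at h_log

lemma tendsto_log_add_mul_sub_log {p : ℝ} (hp : 0 < p) (q : ℝ) :
    Tendsto (fun T => Real.log (q + T * p) - Real.log T) atTop (𝓝 (Real.log p)) := by
  have h_ratio : Tendsto (fun T : ℝ => q / T + p) atTop (𝓝 p) := by
    simpa using (tendsto_id.const_div_atTop q).add_const p
  have h_pos : ∀ᶠ T : ℝ in atTop, 0 < q + T * p :=
    (tendsto_atTop_add_const_left _ q (tendsto_id.atTop_mul_const hp)).eventually_gt_atTop 0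
  refine (h_ratio.log hp.ne').congr' ?_
  filter_upwards [eventually_gt_atTop 0, h_pos] with T hT hpos
  rw [← Real.log_div hpos.ne' hT.ne', add_div, mul_div_cancel_left₀ _ hT.ne']

variable {n : Type*} [Fintype n] [DecidableEq n] {A B : Matrix n n ℂ}

lemma continuousOn_quasiEntropy (hA : A.PosDef) (hB : B.PosDef) :
    ContinuousOn (quasiEntropy hA.1 hB.1) (Set.Ici 0) :=
  continuousOn_finsetSum _ fun i _ => continuousOn_finsetSum _ fun j _ =>
    (continuousOn_const.div (by fun_prop) fun _ ht =>
      (eigenvalues_add_mul_pos hA hB ht i j).ne').const_mul _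

lemma intervalIntegrable_quasiEntropy (hA : A.PosDef) (hB : B.PosDef) {T : ℝ} (hT : 0 ≤ T) :
    IntervalIntegrable (quasiEntropy hA.1 hB.1) MeasureTheory.volume 0 T :=
  ((continuousOn_quasiEntropy hA hB).mono
    ((Set.uIcc_of_le hT).trans_subset Set.Icc_subset_Ici_self)).intervalIntegrable

lemma integral_quasiEntropy (hA : A.PosDef) (hB : B.PosDef) {T : ℝ} (hT : 0 ≤ T) :
    ∫ t in (0 : ℝ)..T, quasiEntropy hA.1 hB.1 t =
      ∑ i, ∑ j, Complex.normSq (eigenTransition hA.1 hB.1 j i) * (hA.1.eigenvalues i *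
        (Real.log (hB.1.eigenvalues j + T * hA.1.eigenvalues i) -
          Real.log (hB.1.eigenvalues j))) := by
  have h_deriv : ∀ t ∈ Set.uIcc 0 T, HasDerivAt (fun s => ∑ i, ∑ j,
      Complex.normSq (eigenTransition hA.1 hB.1 j i) *
        (hA.1.eigenvalues i * Real.log (hB.1.eigenvalues j + s * hA.1.eigenvalues i)))
      (quasiEntropy hA.1 hB.1 t) t := fun t ht =>
    HasDerivAt.fun_sum fun i _ => HasDerivAt.fun_sum fun j _ =>
      (hasDerivAt_mul_log_add_mul
        (eigenvalues_add_mul_pos hA hB (Set.uIcc_of_le hT ▸ ht).1 i j).ne').const_mul _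
  rw [intervalIntegral.integral_eq_sub_of_hasDerivAt h_deriv
    (intervalIntegrable_quasiEntropy hA hB hT)]
  simp only [← Finset.sum_sub_distrib, ← mul_sub, zero_mul, add_zero]

/-- The regularized form of
`Tr A (log A - log B) = ∫₀^∞ (⟨A, (L_B + t R_A)⁻¹ A⟩ - Tr A / (1 + t)) dt`. -/
lemma tendsto_integral_quasiEntropy (hA : A.PosDef) (hB : B.PosDef) :
    Tendsto (fun T => (∫ t in (0 : ℝ)..T, quasiEntropy hA.1 hB.1 t) - A.trace.re * Real.log T)
      atTop (𝓝 (relEntropy A B)) := by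
  rw [relEntropy_eq_sum hA.1 hB.1]
  have h_sum := tendsto_finsetSum Finset.univ fun i _ => tendsto_finsetSum Finset.univ fun j _ =>
    (((tendsto_log_add_mul_sub_log (hA.eigenvalues_pos i) (hB.1.eigenvalues j)).sub_const
      (Real.log (hB.1.eigenvalues j))).const_mul (hA.1.eigenvalues i)).const_mul
        (Complex.normSq (eigenTransition hA.1 hB.1 j i))
  refine h_sum.congr' ?_
  filter_upwards [eventually_ge_atTop 0] with T hT
  rw [integral_quasiEntropy hA hB hT, trace_eq_sum_normSq_eigenTransition hA.1 hB.1]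
  simp only [Finset.sum_mul, ← Finset.sum_sub_distrib]
  refine Finset.sum_congr rfl fun i _ => Finset.sum_congr rfl fun j _ => ?_
  ring

end IntegralRepresentation

section Monotonicity

variable {m n : Type*} [Fintype m] [DecidableEq m] [Fintype n] [DecidableEq n]
  {φ : Matrix m m ℂ →⋆ₐ[ℂ] Matrix n n ℂ} {A B : Matrix n n ℂ} {A' B' : Matrix m m ℂ}

lemma quasiFunctional_starAlgHom (hA : ∀ X, (φ X * A).trace = (X * A').trace)
    (hB : ∀ X, (φ X * B).trace = (X * B').trace) (t : ℝ) (X : Matrix m m ℂ) :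
    quasiFunctional A B t (φ X) = quasiFunctional A' B' t X := by
  have φ_conjTranspose : (φ X)ᴴ = φ Xᴴ := (map_star φ X).symm
  have trace_conj_right : ((φ X)ᴴ * B * φ X).trace = (Xᴴ * B' * X).trace := by
    rw [trace_mul_cycle, φ_conjTranspose, ← map_mul, hB, ← trace_mul_cycle]
  rw [quasiFunctional, quasiFunctional, trace_conj_right, φ_conjTranspose, ← map_mul, hA, hA]

lemma quasiEntropy_le_of_starAlgHom (hA : ∀ X, (φ X * A).trace = (X * A').trace)
    (hB : ∀ X, (φ X * B).trace = (X * B').trace) (hA_pos : A.PosDef) (hB_pos : B.PosDef)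
    (hA'_pos : A'.PosDef) (hB'_pos : B'.PosDef) {t : ℝ} (ht : 0 ≤ t) :
    quasiEntropy hA'_pos.1 hB'_pos.1 t ≤ quasiEntropy hA_pos.1 hB_pos.1 t := by
  obtain ⟨X, hX⟩ := exists_quasiFunctional_eq_quasiEntropy hA'_pos hB'_pos ht
  rw [← hX, ← quasiFunctional_starAlgHom hA hB]
  exact quasiFunctional_le_quasiEntropy hA_pos hB_pos ht (φ X)

lemma relEntropy_le_of_starAlgHom (hA : ∀ X, (φ X * A).trace = (X * A').trace)
    (hB : ∀ X, (φ X * B).trace = (X * B').trace) (hA_pos : A.PosDef) (hB_pos : B.PosDef)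
    (hA'_pos : A'.PosDef) (hB'_pos : B'.PosDef) :
    relEntropy A' B' ≤ relEntropy A B := by
  have trace_eq : A'.trace = A.trace := by
    simpa only [map_one, Matrix.one_mul] using (hA 1).symm
  refine le_of_tendsto_of_tendsto (tendsto_integral_quasiEntropy hA'_pos hB'_pos)
    (tendsto_integral_quasiEntropy hA_pos hB_pos) ?_
  filter_upwards [eventually_ge_atTop 0] with T hT
  rw [trace_eq]
  refine sub_le_sub_right (intervalIntegral.integral_mono_on hT
    (intervalIntegrable_quasiEntropy hA'_pos hB'_pos hT)
    (intervalIntegrable_quasiEntropy hA_pos hB_pos hT) fun t ht => ?_) _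
  exact quasiEntropy_le_of_starAlgHom hA hB hA_pos hB_pos hA'_pos hB'_pos ht.1

end Monotonicity

section PartialTrace

/-- The partial trace over the second factor `y` of a system `z` factorized as `x × y` by `e`. -/
def partialTrace {x y z : Type*} [Fintype y] (e : x × y ≃ z) (M : Matrix z z ℂ) : Matrix x x ℂ :=
  of fun i j => ∑ k, M (e (i, k)) (e (j, k))

/-- The embedding `A ↦ A ⊗ 1` of the observables of the factor `x` into those of a system `z`
factorized as `x × y` by `e`. -/
def ampliation {x y z : Type*} [Fintype x] [DecidableEq x] [Fintype y] [DecidableEq y]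
    [Fintype z] [DecidableEq z] (e : x × y ≃ z) : Matrix x x ℂ →⋆ₐ[ℂ] Matrix z z ℂ where
  toFun A := (A ⊗ₖ (1 : Matrix y y ℂ)).submatrix e.symm e.symm
  map_one' := by rw [one_kronecker_one, submatrix_one_equiv]
  map_mul' A B := by rw [submatrix_mul_equiv, ← mul_kronecker_mul, Matrix.one_mul]
  map_zero' := by rw [zero_kronecker, submatrix_zero, Pi.zero_apply, Pi.zero_apply]
  map_add' A B := by rw [add_kronecker, submatrix_add, Pi.add_apply, Pi.add_apply]
  commutes' c := by
    rw [Algebra.algebraMap_eq_smul_one, smul_kronecker, one_kronecker_one, submatrix_smul,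
      Pi.smul_apply, Pi.smul_apply, submatrix_one_equiv, Algebra.algebraMap_eq_smul_one]
  map_star' A := by
    rw [star_eq_conjTranspose, star_eq_conjTranspose, conjTranspose_submatrix,
      conjTranspose_kronecker, conjTranspose_one]

section Positivity

variable {x y z : Type*} [Fintype y] {e : x × y ≃ z} {M : Matrix z z ℂ}

lemma partialTrace_eq_sum_submatrix (e : x × y ≃ z) (M : Matrix z z ℂ) :
    partialTrace e M = ∑ k, M.submatrix (fun i => e (i, k)) (fun i => e (i, k)) := by
  ext i j
  rw [Matrix.sum_apply]
  rfl

lemma partialTrace_zero (e : x × y ≃ z) : partialTrace e 0 = 0 := by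
  ext i j
  simp only [partialTrace, of_apply, Matrix.zero_apply, Finset.sum_const_zero]

lemma posSemidef_partialTrace (hM : M.PosSemidef) : (partialTrace e M).PosSemidef := by
  rw [partialTrace_eq_sum_submatrix]
  exact posSemidef_sum _ fun k _ => hM.submatrix _

lemma posDef_partialTrace [Nonempty y] (hM : M.PosDef) : (partialTrace e M).PosDef := by
  rw [partialTrace_eq_sum_submatrix]
  exact posDef_sum Finset.univ_nonempty fun k _ =>
    hM.submatrix (e.injective.comp (Prod.mk_left_injective k))

lemma partialTrace_add_smul_one [DecidableEq x] [DecidableEq z] (e : x × y ≃ z)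
    (M : Matrix z z ℂ) (c : ℝ) :
    partialTrace e (M + c • 1) = partialTrace e M + (Fintype.card y * c) • 1 := by
  ext i j
  simp [partialTrace, Finset.sum_add_distrib, Matrix.one_apply]

end Positivity

section Ampliation

variable {x y z : Type*} [Fintype x] [DecidableEq x] [Fintype y] [DecidableEq y]
  [Fintype z] [DecidableEq z] {e : x × y ≃ z} {A : Matrix x x ℂ}

lemma ampliation_apply (e : x × y ≃ z) (A : Matrix x x ℂ) (i j : x) (k l : y) :
    ampliation e A (e (i, k)) (e (j, l)) = A i j * (1 : Matrix y y ℂ) k l := by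
  change (A ⊗ₖ (1 : Matrix y y ℂ)) (e.symm (e (i, k))) (e.symm (e (j, l))) = _
  rw [e.symm_apply_apply, e.symm_apply_apply, kronecker_apply]

lemma posDef_ampliation (hA : A.PosDef) : (ampliation e A).PosDef :=
  (hA.kronecker PosDef.one).submatrix e.symm.injective

lemma trace_ampliation_mul (e : x × y ≃ z) (A : Matrix x x ℂ) (M : Matrix z z ℂ) :
    (ampliation e A * M).trace = (A * partialTrace e M).trace := by
  simp only [trace, diag_apply, mul_apply, ← e.sum_comp, Fintype.sum_prod_type, ampliation_apply,
    one_apply, mul_ite, mul_one, mul_zero, ite_mul, zero_mul, Finset.sum_ite_eq,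
    Finset.mem_univ, if_true, partialTrace, of_apply, Finset.mul_sum]
  exact Finset.sum_congr rfl fun i _ => Finset.sum_comm

lemma ampliation_cfc (e : x × y ≃ z) (hA : A.IsHermitian) (f : ℝ → ℝ) :
    ampliation e (cfc f A) = cfc f (ampliation e A) :=
  StarAlgHomClass.map_cfc (ampliation e) f A (continuousOn_spectrum_real f A)
    (ampliation e).toLinearMap.continuous_of_finiteDimensional hA.isSelfAdjoint
    (hA.isSelfAdjoint.map _)

end Ampliation

section CommutingSquare

variable {a b c ab bc abc : Type*} {e : ab × c ≃ abc} {f : bc × a ≃ abc} {g : b × c ≃ bc}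
  {h : b × a ≃ ab}

lemma partialTrace_partialTrace_comm [Fintype a] [Fintype c]
    (h_comm : ∀ i j k, e (h (j, i), k) = f (g (j, k), i)) (M : Matrix abc abc ℂ) :
    partialTrace h (partialTrace e M) = partialTrace g (partialTrace f M) := by
  ext i j
  simp only [partialTrace, of_apply, h_comm]
  exact Finset.sum_comm

variable [Fintype a] [Fintype b] [DecidableEq b] [Fintype c] [DecidableEq c]
  [Fintype ab] [DecidableEq ab] [Fintype bc] [DecidableEq bc] [Fintype abc] [DecidableEq abc]

lemma partialTrace_ampliation_comm (h_comm : ∀ i j k, e (h (j, i), k) = f (g (j, k), i))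
    (A : Matrix ab ab ℂ) :
    partialTrace f (ampliation e A) = ampliation g (partialTrace h A) := by
  ext m m'
  obtain ⟨⟨j, k⟩, rfl⟩ := g.surjective m
  obtain ⟨⟨j', k'⟩, rfl⟩ := g.surjective m'
  simp only [ampliation_apply, partialTrace, of_apply, ← h_comm, Finset.sum_mul]

end CommutingSquare

end PartialTrace

section Entropy

variable {n : Type} [Fintype n] [DecidableEq n] {A : Matrix n n ℂ}

lemma log_two_mul_negxlog2 (x : ℝ) : Real.log 2 * negxlog2 x = Real.negMulLog x := by
  rw [negxlog2, Real.negMulLog, mul_neg, mul_left_comm, Real.logb,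
    mul_div_cancel₀ _ (Real.log_pos one_lt_two).ne', neg_mul]

lemma continuous_negxlog2 : Continuous negxlog2 := by
  have h_eq : negxlog2 = fun x => Real.negMulLog x / Real.log 2 := by
    funext x
    rw [← log_two_mul_negxlog2, mul_div_cancel_left₀ _ (Real.log_pos one_lt_two).ne']
  rw [h_eq]
  exact Real.continuous_negMulLog.div_const _

lemma vnEntropy_eq_trace_cfc (hA : A.IsHermitian) : vnEntropy A = (cfc negxlog2 A).trace.re := by
  rw [vnEntropy, dif_pos hA, trace_cfc hA, Complex.re_sum]
  rfl

lemma log_two_mul_vnEntropy (hA : A.IsHermitian) :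
    Real.log 2 * vnEntropy A = -(A * cfc Real.log A).trace.re := by
  rw [mul_cfc_log hA, vnEntropy, dif_pos hA, trace_cfc hA, Complex.re_sum, Finset.mul_sum,
    ← Finset.sum_neg_distrib]
  refine Finset.sum_congr rfl fun i _ => ?_
  rw [log_two_mul_negxlog2, Real.negMulLog, neg_mul, Complex.ofReal_re]

lemma cfc_add_smul_one (hA : A.IsHermitian) (f : ℝ → ℝ) (c : ℝ) :
    cfc f (A + c • 1) = cfc (fun x => f (x + c)) A := by
  have h_shift : A + c • 1 = cfc (fun x => x + c) A := by
    rw [cfc_add_const c (fun x => x) A (by fun_prop) hA.isSelfAdjoint,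
      cfc_id' ℝ A hA.isSelfAdjoint, Algebra.algebraMap_eq_smul_one]
  rw [h_shift, ← cfc_comp' f (fun x => x + c) A
    ((A.finite_real_spectrum.image _).continuousOn _) (by fun_prop) hA.isSelfAdjoint]

lemma continuous_vnEntropy_add_smul_one (hA : A.IsHermitian) :
    Continuous fun c : ℝ => vnEntropy (A + c • 1) := by
  have h_eq (c : ℝ) : vnEntropy (A + c • 1) = ∑ i, negxlog2 (hA.eigenvalues i + c) := by
    rw [vnEntropy_eq_trace_cfc (hA.add (isHermitian_one.smul (IsSelfAdjoint.all c))),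
      cfc_add_smul_one hA, trace_cfc hA, Complex.re_sum]
    rfl
  simp only [h_eq]
  exact continuous_finsetSum _ fun i _ => continuous_negxlog2.comp (continuous_const_add _)

lemma vnEntropy_zero : vnEntropy (0 : Matrix n n ℂ) = 0 := by
  rw [vnEntropy_eq_trace_cfc isHermitian_zero, cfc_apply_zero]
  simp [negxlog2]

variable {x y z : Type} [Fintype x] [DecidableEq x] [Fintype y] [DecidableEq y]
  [Fintype z] [DecidableEq z]

lemma relEntropy_ampliation_partialTrace (e : x × y ≃ z) {M : Matrix z z ℂ}
    (hM : M.IsHermitian) (hM' : (partialTrace e M).IsHermitian) :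
    relEntropy M (ampliation e (partialTrace e M)) =
      Real.log 2 * (vnEntropy (partialTrace e M) - vnEntropy M) := by
  rw [relEntropy, Matrix.mul_sub, trace_sub, Complex.sub_re, ← ampliation_cfc e hM',
    trace_mul_comm M (ampliation e _), trace_ampliation_mul, trace_mul_comm (cfc _ _),
    mul_sub, log_two_mul_vnEntropy hM, log_two_mul_vnEntropy hM']
  ring

end Entropy

section StrongSubadditivity

variable {a b c ab bc abc : Type} [Fintype a] [Fintype b] [DecidableEq b] [Fintype c]
  [Fintype ab] [DecidableEq ab] [Fintype bc] [DecidableEq bc] [Fintype abc] [DecidableEq abc]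
  {e : ab × c ≃ abc} {f : bc × a ≃ abc} {g : b × c ≃ bc} {h : b × a ≃ ab}
  {M : Matrix abc abc ℂ}

lemma vnEntropy_strong_subadditivity_of_posDef [Nonempty a] [Nonempty c]
    (h_comm : ∀ i j k, e (h (j, i), k) = f (g (j, k), i)) (hM : M.PosDef) :
    vnEntropy M + vnEntropy (partialTrace g (partialTrace f M)) ≤
      vnEntropy (partialTrace e M) + vnEntropy (partialTrace f M) := by
  classical
  have he : (partialTrace e M).PosDef := posDef_partialTrace hM
  have hf : (partialTrace f M).PosDef := posDef_partialTrace hM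
  have hg : (partialTrace g (partialTrace f M)).PosDef := posDef_partialTrace hf
  have h_marginal : partialTrace f (ampliation e (partialTrace e M)) =
      ampliation g (partialTrace g (partialTrace f M)) := by
    rw [partialTrace_ampliation_comm h_comm, partialTrace_partialTrace_comm h_comm]
  have h_mono : relEntropy (partialTrace f M) (ampliation g (partialTrace g (partialTrace f M))) ≤
      relEntropy M (ampliation e (partialTrace e M)) :=
    relEntropy_le_of_starAlgHom (trace_ampliation_mul f · M)
      (fun X => by rw [trace_ampliation_mul, h_marginal]) hM (posDef_ampliation he) hf
      (posDef_ampliation hg)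
  rw [relEntropy_ampliation_partialTrace e hM.1 he.1,
    relEntropy_ampliation_partialTrace g hf.1 hg.1] at h_mono
  linarith [le_of_mul_le_mul_left h_mono (Real.log_pos one_lt_two)]

lemma vnEntropy_strong_subadditivity (h_comm : ∀ i j k, e (h (j, i), k) = f (g (j, k), i))
    (hM : M.PosSemidef) :
    vnEntropy M + vnEntropy (partialTrace g (partialTrace f M)) ≤
      vnEntropy (partialTrace e M) + vnEntropy (partialTrace f M) := by
  rcases isEmpty_or_nonempty abc with h_empty | ⟨⟨m⟩⟩
  · simp only [Subsingleton.elim M 0, partialTrace_zero, vnEntropy_zero, le_refl]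
  have : Nonempty a := ⟨(f.symm m).2⟩
  have : Nonempty c := ⟨(e.symm m).2⟩
  have he : (partialTrace e M).PosSemidef := posSemidef_partialTrace hM
  have hf : (partialTrace f M).PosSemidef := posSemidef_partialTrace hM
  have hg : (partialTrace g (partialTrace f M)).PosSemidef := posSemidef_partialTrace hf
  have h_shifted (ε : ℝ) (hε : 0 < ε) :
      vnEntropy (M + ε • 1) + vnEntropy (partialTrace g (partialTrace f M) +
          (Fintype.card c * (Fintype.card a * ε)) • 1) ≤
        vnEntropy (partialTrace e M + (Fintype.card c * ε) • 1) +
          vnEntropy (partialTrace f M + (Fintype.card a * ε) • 1) := by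
    have h_ssa := vnEntropy_strong_subadditivity_of_posDef h_comm
      (PosDef.posSemidef_add hM (PosDef.one.smul hε))
    rwa [partialTrace_add_smul_one, partialTrace_add_smul_one, partialTrace_add_smul_one] at h_ssa
  have h_cont_left := (continuous_vnEntropy_add_smul_one hM.1).add
    ((continuous_vnEntropy_add_smul_one hg.1).comp
      ((continuous_const_mul (Fintype.card c : ℝ)).comp
        (continuous_const_mul (Fintype.card a : ℝ))))
  have h_cont_right := ((continuous_vnEntropy_add_smul_one he.1).comp
    (continuous_const_mul (Fintype.card c : ℝ))).add
      ((continuous_vnEntropy_add_smul_one hf.1).comp (continuous_const_mul (Fintype.card a : ℝ)))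
  have h_limit := le_of_tendsto_of_tendsto
    ((h_cont_left.tendsto 0).mono_left (nhdsWithin_le_nhds (s := Set.Ioi 0)))
    ((h_cont_right.tendsto 0).mono_left nhdsWithin_le_nhds)
    (eventually_mem_nhdsWithin.mono h_shifted)
  simpa only [Pi.add_apply, Function.comp_apply, mul_zero, zero_smul, add_zero] using h_limit

end StrongSubadditivity

section Multipartite

section MergeEquiv

variable {ι : Type*} {d : ι → Type*} {p q r : ι → Prop} [DecidablePred q]

/-- Basis indices of the parties in `p` are pairs of basis indices of the parties in `q` and in `r`
when `p` is the disjoint union of `q` and `r`. Predicates rather than finsets are used because `pTr`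
is indexed both by finsets and by their complements. -/
def mergeEquiv (h_union : ∀ i, p i ↔ q i ∨ r i) (h_disj : ∀ i, q i → ¬ r i) :
    (((i : {j // q j}) → d i) × ((i : {j // r j}) → d i)) ≃ ((i : {j // p j}) → d i) where
  toFun x i := if h : q i then x.1 ⟨i, h⟩ else x.2 ⟨i, ((h_union i).1 i.2).resolve_left h⟩
  invFun x := (fun i => x ⟨i, (h_union i).2 (.inl i.2)⟩, fun i => x ⟨i, (h_union i).2 (.inr i.2)⟩)
  left_inv x := Prod.ext (funext fun i => dif_pos i.2)
    (funext fun i => dif_neg fun h => h_disj i h i.2)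
  right_inv x := by
    funext i
    by_cases h : q i <;> simp [h]

lemma mergeEquiv_apply (h_union : ∀ i, p i ↔ q i ∨ r i) (h_disj : ∀ i, q i → ¬ r i)
    (x : ((i : {j // q j}) → d i) × ((i : {j // r j}) → d i)) (i : {j // p j}) :
    mergeEquiv h_union h_disj x i =
      if h : q i then x.1 ⟨i, h⟩ else x.2 ⟨i, ((h_union i).1 i.2).resolve_left h⟩ :=
  rfl

end MergeEquiv

variable {ι : Type} [Fintype ι] [DecidableEq ι] {d : ι → Type} [∀ i, Fintype (d i)]
  {ρ : Matrix (∀ i, d i) (∀ i, d i) ℂ}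

lemma posSemidef_pTr (hρ : ρ.PosSemidef) (s : Finset ι) : (pTr ρ s).PosSemidef := by
  have h_sum : pTr ρ s = ∑ z, ρ.submatrix (combine s · z) (combine s · z) := by
    ext x y
    rw [Matrix.sum_apply]
    rfl
  rw [h_sum]
  exact posSemidef_sum _ fun z _ => hρ.submatrix _

lemma partialTrace_pTr (ρ : Matrix (∀ i, d i) (∀ i, d i) ℂ) {s t u : Finset ι}
    (h_union : ∀ i, i ∈ u ↔ i ∈ s ∨ i ∈ t) (h_disj : ∀ i, i ∈ s → i ∉ t) :
    partialTrace (mergeEquiv h_union h_disj) (pTr ρ u) = pTr ρ s := by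
  have h_compl_union (i : ι) : i ∉ s ↔ i ∈ t ∨ i ∉ u := by grind
  have h_compl_disj (i : ι) : i ∈ t → ¬ i ∉ u := by grind
  have h_combine (x : (i : {j // j ∈ s}) → d i) (w : (i : {j // j ∈ t}) → d i)
      (z : (i : {j // j ∉ u}) → d i) : combine u (mergeEquiv h_union h_disj (x, w)) z =
        combine s x (mergeEquiv h_compl_union h_compl_disj (w, z)) := by
    funext i
    simp only [combine, mergeEquiv_apply]
    grind
  ext x y
  simp only [partialTrace, of_apply, pTr, h_combine]
  rw [← Fintype.sum_prod_type']
  exact (mergeEquiv h_compl_union h_compl_disj).sum_comp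
    fun z => ρ (combine s x z) (combine s y z)

lemma Sv_union_add_Sv_inter_le [∀ i, DecidableEq (d i)] (hρ : ρ.PosSemidef) (s t : Finset ι) :
    Sv ρ (s ∪ t) + Sv ρ (s ∩ t) ≤ Sv ρ s + Sv ρ t := by
  have h_union_left (i : ι) : i ∈ s ∪ t ↔ i ∈ s ∨ i ∈ t \ s := by grind
  have h_union_right (i : ι) : i ∈ s ∪ t ↔ i ∈ t ∨ i ∈ s \ t := by grind
  have h_right (i : ι) : i ∈ t ↔ i ∈ s ∩ t ∨ i ∈ t \ s := by grind
  have h_left (i : ι) : i ∈ s ↔ i ∈ s ∩ t ∨ i ∈ s \ t := by grind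
  have h_ssa := vnEntropy_strong_subadditivity
    (e := mergeEquiv h_union_left (by grind)) (f := mergeEquiv h_union_right (by grind))
    (g := mergeEquiv h_right (by grind)) (h := mergeEquiv h_left (by grind))
    (fun x y z => by
      funext i
      simp only [mergeEquiv_apply]
      grind)
    (posSemidef_pTr hρ (s ∪ t))
  rwa [partialTrace_pTr, partialTrace_pTr, partialTrace_pTr] at h_ssa

end Multipartite

section DualInformation

variable {α : Type*} [GeneralizedBooleanAlgebra α] {f : α → ℝ}

/-- Submodularity, which for the entropy of a multipartite state is strong subadditivity. -/
def IsSubmodular (f : α → ℝ) : Prop :=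
  ∀ a b, f (a ⊔ b) + f (a ⊓ b) ≤ f a + f b

/-- The dual multipartite mutual information of an arbitrary set function `f` in place of the
entropy. -/
def dualInfo (f : α → ℝ) (P : Finset α) : ℝ :=
  (∑ X ∈ P, f (P.sup id \ X)) - ((P.card : ℝ) - 1) * f (P.sup id)

lemma dualInfo_eq_add_sum (f : α → ℝ) (P : Finset α) :
    dualInfo f P = f (P.sup id) + ∑ X ∈ P, (f (P.sup id \ X) - f (P.sup id)) := by
  rw [dualInfo, Finset.sum_sub_distrib, Finset.sum_const, nsmul_eq_mul]
  ring

lemma dualInfo_insert [DecidableEq α] {R : Finset α} {a : α} (f : α → ℝ)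
    (ha : a ∉ R) (h_disj : Disjoint a (R.sup id)) :
    dualInfo f (insert a R) =
      f (R.sup id) + ∑ X ∈ R, (f ((a ⊔ R.sup id) \ X) - f (a ⊔ R.sup id)) := by
  rw [dualInfo_eq_add_sum, Finset.sum_insert ha, Finset.sup_insert, id,
    h_disj.sup_sdiff_cancel_left]
  ring

namespace IsSubmodular

lemma sdiff_sub_mono (hf : IsSubmodular f) {a b c : α} (hab : a ≤ b) (hbc : b ≤ c) :
    f (b \ a) - f b ≤ f (c \ a) - f c := by
  have h := hf b (c \ a)
  rw [sup_sdiff_cancel' hab hbc, ← inf_sdiff_assoc, inf_of_le_left hbc] at h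
  linarith

variable {P Q R T : Finset α} {a b : α}

lemma sdiff_sup_sub_le (hf : IsSubmodular f) (hT : T.SupIndep id) (a : α) :
    f (a \ T.sup id) - f a ≤ ∑ X ∈ T, (f (a \ X) - f a) := by
  classical
  induction T using Finset.induction_on with
  | empty => simp
  | insert X T hX ih =>
    have h_disj : X ⊓ T.sup id = ⊥ :=
      (hT (Finset.subset_insert X T) (Finset.mem_insert_self X T) hX).eq_bot
    have h := hf (a \ X) (a \ T.sup id)
    rw [← sdiff_inf, h_disj, sdiff_bot, ← sdiff_sup] at h
    rw [Finset.sum_insert hX, Finset.sup_insert, id]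
    linarith [ih (hT.subset (Finset.subset_insert X T))]

lemma dualInfo_le_of_subset (hf : IsSubmodular f) (hP : P.SupIndep id) (hQP : Q ⊆ P) :
    dualInfo f Q ≤ dualInfo f P := by
  classical
  have h_sup : (P \ Q).sup id ⊔ Q.sup id = P.sup id := by
    rw [← Finset.sup_union, Finset.sdiff_union_of_subset hQP]
  have h_sup_sdiff : P.sup id \ (P \ Q).sup id = Q.sup id := by
    rw [← h_sup]
    exact (hP.disjoint_sup_sup Finset.sdiff_subset hQP Finset.sdiff_disjoint).sup_sdiff_cancel_left
  have h_discarded := hf.sdiff_sup_sub_le (hP.subset (Finset.sdiff_subset (t := Q))) (P.sup id)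
  have h_kept : ∑ X ∈ Q, (f (Q.sup id \ X) - f (Q.sup id)) ≤
      ∑ X ∈ Q, (f (P.sup id \ X) - f (P.sup id)) := Finset.sum_le_sum fun X hX =>
    hf.sdiff_sub_mono (Finset.le_sup (f := id) hX) (Finset.sup_mono hQP)
  rw [h_sup_sdiff] at h_discarded
  rw [dualInfo_eq_add_sum, dualInfo_eq_add_sum, ← Finset.sum_sdiff hQP]
  linarith

variable [DecidableEq α]

lemma dualInfo_insert_sup_sdiff_le (hf : IsSubmodular f) (hP : P.SupIndep id) (hT : T ⊆ P)
    (hT_notMem : T.sup id ∉ P \ T) : dualInfo f (insert (T.sup id) (P \ T)) ≤ dualInfo f P := by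
  have h_sup : (insert (T.sup id) (P \ T)).sup id = P.sup id := by
    rw [Finset.sup_insert, id, ← Finset.sup_union, Finset.union_sdiff_of_subset hT]
  rw [dualInfo_eq_add_sum, dualInfo_eq_add_sum, h_sup, Finset.sum_insert hT_notMem,
    ← Finset.sum_sdiff hT]
  linarith [hf.sdiff_sup_sub_le (hP.subset hT) (P.sup id)]

lemma dualInfo_insert_mono (hf : IsSubmodular f) (hab : a ≤ b) (ha : a ∉ R) (hb : b ∉ R)
    (h_disj : Disjoint b (R.sup id)) : dualInfo f (insert a R) ≤ dualInfo f (insert b R) := by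
  rw [dualInfo_insert f ha (h_disj.mono_left hab), dualInfo_insert f hb h_disj]
  refine add_le_add_right (Finset.sum_le_sum fun X hX => ?_) _
  exact hf.sdiff_sub_mono (le_sup_of_le_right (Finset.le_sup (f := id) hX))
    (sup_le_sup_right hab _)

end IsSubmodular

end DualInformation

section Coarsening

variable {ι : Type} [DecidableEq ι] {P Q R T : Finset (Finset ι)} {X : Finset ι}

namespace IsPartition

lemma supIndep (hP : IsPartition P) : P.SupIndep id :=
  Finset.supIndep_iff_pairwiseDisjoint.2 hP.2

lemma subset (hP : IsPartition P) (hQP : Q ⊆ P) : IsPartition Q :=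
  ⟨fun X hX => hP.1 X (hQP hX), hP.2.subset (Finset.coe_subset.2 hQP)⟩

lemma insert (hR : IsPartition R) (hX : X.Nonempty) (h_disj : Disjoint X (R.sup id)) :
    IsPartition (insert X R) :=
  ⟨(Finset.forall_mem_insert _ _ _).2 ⟨hX, hR.1⟩, (hR.supIndep.insert h_disj).pairwiseDisjoint⟩

lemma sup_nonempty (hP : IsPartition P) (hP_ne : P.Nonempty) : (P.sup id).Nonempty :=
  let ⟨X, hX⟩ := hP_ne
  (hP.1 X hX).mono (Finset.le_sup (f := id) hX)

lemma disjoint_sup_sup_sdiff (hP : IsPartition P) (hT : T ⊆ P) :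
    Disjoint (T.sup id) ((P \ T).sup id) :=
  hP.supIndep.disjoint_sup_sup hT Finset.sdiff_subset Finset.disjoint_sdiff

lemma disjoint_sup_erase (hP : IsPartition P) (hX : X ∈ P) : Disjoint X ((P.erase X).sup id) :=
  Finset.supIndep_iff_disjoint_erase.1 hP.supIndep X hX

end IsPartition

lemma notMem_of_disjoint_sup (hX : X.Nonempty) (h_disj : Disjoint X (R.sup id)) : X ∉ R :=
  fun hXR => hX.ne_empty (h_disj.eq_bot_of_le (Finset.le_sup (f := id) hXR))

lemma CoarserStep.isPartition (h : CoarserStep P Q) (hP : IsPartition P) : IsPartition Q := by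
  cases h with
  | discard hQP _ => exact hP.subset hQP
  | merge T hT hT_ne =>
    exact (hP.subset Finset.sdiff_subset).insert ((hP.subset hT).sup_nonempty hT_ne)
      (hP.disjoint_sup_sup_sdiff hT)
  | shrink X X' hX _ hX'X hX' =>
    exact (hP.subset (Finset.erase_subset X P)).insert hX'
      ((hP.disjoint_sup_erase hX).mono_left hX'X)

variable {f : Finset ι → ℝ}

lemma IsSubmodular.dualInfo_le_of_coarserStep (hf : IsSubmodular f) (hP : IsPartition P)
    (h : CoarserStep P Q) : dualInfo f Q ≤ dualInfo f P := by
  cases h with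
  | discard hQP _ => exact hf.dualInfo_le_of_subset hP.supIndep hQP
  | merge T hT hT_ne =>
    exact hf.dualInfo_insert_sup_sdiff_le hP.supIndep hT (notMem_of_disjoint_sup
      ((hP.subset hT).sup_nonempty hT_ne) (hP.disjoint_sup_sup_sdiff hT))
  | shrink X X' hX _ hX'X hX' =>
    have h_disj := hP.disjoint_sup_erase hX
    have h_mono := hf.dualInfo_insert_mono hX'X
      (notMem_of_disjoint_sup hX' (h_disj.mono_left hX'X)) (Finset.notMem_erase X P) h_disj
    rwa [Finset.insert_erase hX] at h_mono

lemma IsSubmodular.dualInfo_le_of_coarser (hf : IsSubmodular f) (hP : IsPartition P)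
    (h : Coarser P Q) : dualInfo f Q ≤ dualInfo f P := by
  suffices IsPartition Q ∧ dualInfo f Q ≤ dualInfo f P from this.2
  induction h with
  | refl => exact ⟨hP, le_rfl⟩
  | tail _ h_step ih =>
    exact ⟨h_step.isPartition ih.1, (hf.dualInfo_le_of_coarserStep ih.1 h_step).trans ih.2⟩

end Coarsening

theorem dualMutualInfo_mono_of_coarser_general
    {ι : Type} [Fintype ι] [DecidableEq ι] {d : ι → Type}
    [∀ i, Fintype (d i)] [∀ i, DecidableEq (d i)]
    {ρ : Matrix (∀ i, d i) (∀ i, d i) ℂ} (hρ : ρ.PosSemidef)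
    {P Q : Finset (Finset ι)} (hP : IsPartition P) (hPQ : Coarser P Q) :
    MI' ρ Q ≤ MI' ρ P :=
  have h_submodular : IsSubmodular (Sv ρ) := Sv_union_add_Sv_inter_le hρ
  h_submodular.dualInfo_le_of_coarser hP hPQ

/-- If the partition `Y₁|⋯|Y_l` of (a subsystem of) an `n`-partite system is
coarser than the partition `X₁|⋯|X_k`, then for every density operator `ρ`,
`I'(X₁:⋯:X_k) ≥ I'(Y₁:⋯:Y_l)`. -/
theorem dualMutualInfo_mono_of_coarser
    {ι : Type} [Fintype ι] [DecidableEq ι] {d : ι → Type}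
    [∀ i, Fintype (d i)] [∀ i, DecidableEq (d i)]
    (ρ : Matrix (∀ i, d i) (∀ i, d i) ℂ) (hρ : IsDensity ρ)
    (P Q : Finset (Finset ι)) (hP : IsPartition P) (hPQ : Coarser P Q) :
    MI' ρ Q ≤ MI' ρ P :=
  dualMutualInfo_mono_of_coarser_general hρ.1 hP hPQ
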